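/- Let f : ℝ × ℝ^m → ℝ be smooth and suppose for each w near w₀ the map t ↦ f(t,w) has zeros of odd order with a sign change from + to −, and assume ∂_t^k f ≠ 0 near a point where f vanishes to order exactly k. Then the set of points in f^{-1}(0) where the order of vanishing in t is locally constant is open and dense in f^{-1}(0) near that point; consequently one can find (t₀, w₁) arbitrarily close with f(·, w₁) vanishing to constant odd order k near w₁, and by the implicit function theorem applied to ∂_t^{k-1} f, f(t,w) = a(t,w)(t − t₀(w))^k with a smooth, a < 0, and t₀ smooth near w₁. -/

import Mathlib

/-!
The order of vanishing in `t` is bounded by `k` and upper semicontinuous near `(t₀, w₀)`, so on any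
small open set meeting `f⁻¹(0)` a zero of minimal order has locally constant order: this gives
density.

For the factorization, call a zero of odd order with negative leading derivative a down crossing.
The sign change at a down crossing of order `j` persists on nearby slices `t ↦ f t w`, which
therefore have down crossings of order at most `j` close by. Around a down crossing of minimal order
`j` these have order exactly `j`, so they are zeros of `∂ₜ^(j-1) f`; there `∂ₜʲ f ≠ 0`, and the
implicit function theorem makes them a smooth curve `t = θ w`. The integral form of the Taylor
remainder at `θ w` then exhibits `f t w / (t - θ w) ^ j` as a smooth function, negative near the
crossing.
-/

open Set Filter
open scoped ContDiff Topology Nat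

theorem exists_eventually_norm_le_of_isCompact {X Y F : Type*} [TopologicalSpace X]
    [TopologicalSpace Y] [SeminormedAddCommGroup F] {H : X × Y → F} (hH : Continuous H) (x : X)
    {K : Set Y} (hK : IsCompact K) : ∃ C, ∀ᶠ x' in 𝓝 x, ∀ y ∈ K, ‖H (x', y)‖ ≤ C := by
  obtain ⟨C, hC⟩ := hK.exists_bound_of_continuousOn
    (hH.comp (Continuous.prodMk_right x)).continuousOn
  refine ⟨C + 1, hK.eventually_forall_of_forall_eventually fun y hy => ?_⟩
  have hlt : ‖H (x, y)‖ < C + 1 := (hC y hy).trans_lt (lt_add_one C)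
  exact (hH.norm.continuousAt.eventually_lt_const hlt).mono fun _ => le_of_lt

section ParametricIntegral

variable {E F : Type*} [NormedAddCommGroup E] [NormedSpace ℝ E]
  [NormedAddCommGroup F] [NormedSpace ℝ F]

theorem hasFDerivAt_intervalIntegral_of_contDiff {G : E × ℝ → F} (hG : ContDiff ℝ 1 G)
    (a b : ℝ) (x : E) :
    HasFDerivAt (fun x => ∫ s in a..b, G (x, s))
      (∫ s in a..b, fderiv ℝ G (x, s) ∘L .inl ℝ E ℝ) x := by
  have hcont : Continuous fun q : E × ℝ => fderiv ℝ G q ∘L .inl ℝ E ℝ :=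
    (hG.continuous_fderiv one_ne_zero).clm_comp continuous_const
  obtain ⟨C, hC⟩ :=
    exists_eventually_norm_le_of_isCompact hcont x (isCompact_uIcc (a := a) (b := b))
  refine intervalIntegral.hasFDerivAt_integral_of_dominated_of_fderiv_le (F := fun y s => G (y, s))
    (F' := fun y s => fderiv ℝ G (y, s) ∘L .inl ℝ E ℝ) (bound := fun _ => C) hC ?_ ?_ ?_ ?_ ?_ ?_
  · exact .of_forall fun y => (hG.continuous.comp (.prodMk_right y)).aestronglyMeasurable
  · exact (hG.continuous.comp (.prodMk_right x)).intervalIntegrable _ _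
  · exact (hcont.comp (.prodMk_right x)).aestronglyMeasurable
  · exact .of_forall fun s hs y hy => hy s (uIoc_subset_uIcc hs)
  · exact intervalIntegrable_const
  · exact .of_forall fun s _ y _ => ((hG.differentiable one_ne_zero) (y, s)).hasFDerivAt.comp y
      (hasFDerivAt_prodMk_left y s)

/-- The `m`-th derivative of `G : E × ℝ → F` in its first variable, as a multilinear map on `E`,
obtained by restricting the full derivative. -/
noncomputable def iteratedFDerivFst (m : ℕ) (G : E × ℝ → F) (q : E × ℝ) : E [×m]→L[ℝ] F :=
  ContinuousMultilinearMap.compContinuousLinearMapL (fun _ => .inl ℝ E ℝ) (iteratedFDeriv ℝ m G q)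

theorem contDiff_iteratedFDerivFst {k m : ℕ} {G : E × ℝ → F} (hG : ContDiff ℝ (k + m : ℕ) G) :
    ContDiff ℝ k (iteratedFDerivFst m G) :=
  (ContinuousLinearMap.contDiff _).comp (hG.iteratedFDeriv_right (by exact_mod_cast le_rfl))

theorem fderiv_iteratedFDerivFst_comp_inl {m : ℕ} {G : E × ℝ → F}
    (hG : ContDiff ℝ (m + 1 : ℕ) G) (q : E × ℝ) :
    fderiv ℝ (iteratedFDerivFst m G) q ∘L .inl ℝ E ℝ =
      (iteratedFDerivFst (m + 1) G q).curryLeft := by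
  have hdiff : DifferentiableAt ℝ (iteratedFDeriv ℝ m G) q :=
    hG.differentiable_iteratedFDeriv (by exact_mod_cast m.lt_succ_self) q
  have hchain : fderiv ℝ (iteratedFDerivFst m G) q =
      ContinuousMultilinearMap.compContinuousLinearMapL (fun _ => .inl ℝ E ℝ) ∘L
        fderiv ℝ (iteratedFDeriv ℝ m G) q :=
    ((ContinuousLinearMap.hasFDerivAt _).comp q hdiff.hasFDerivAt).fderiv
  ext v w
  have hcons : (Fin.cons (v, 0) fun i => (w i, 0) : Fin (m + 1) → E × ℝ) =
      fun i => ((Fin.cons v w : Fin (m + 1) → E) i, 0) :=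
    funext fun i => Fin.cases rfl (fun _ => rfl) i
  simp [hchain, fderiv_iteratedFDeriv, iteratedFDerivFst, hcons]

theorem contDiff_intervalIntegral_of_contDiff [CompleteSpace F] {n : ℕ∞} {G : E × ℝ → F}
    (hG : ContDiff ℝ n G) (a b : ℝ) : ContDiff ℝ n fun x => ∫ s in a..b, G (x, s) := by
  have hGm {m : ℕ} (hm : m ≤ n) : ContDiff ℝ m G := hG.of_le (by exact_mod_cast hm)
  have hcont {m : ℕ} (hm : m ≤ n) : Continuous (iteratedFDerivFst m G) :=
    (contDiff_iteratedFDerivFst (k := 0) ((zero_add m).symm ▸ hGm hm)).continuous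
  have hint {m : ℕ} (hm : m ≤ n) (x : E) :
      IntervalIntegrable (fun s => iteratedFDerivFst m G (x, s)) MeasureTheory.volume a b :=
    ((hcont hm).comp (.prodMk_right x)).intervalIntegrable a b
  refine HasFTaylorSeriesUpTo.contDiff
    (f' := fun x m => ∫ s in a..b, iteratedFDerivFst m G (x, s))
    ⟨fun x => ?_, fun m hm x => ?_, fun m hm => ?_⟩
  · let curry0 : (E [×0]→L[ℝ] F) →L[ℝ] F :=
      (continuousMultilinearCurryFin0 ℝ E F).toContinuousLinearEquiv
    exact (curry0.intervalIntegral_comp_comm (hint zero_le x)).symm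
  · have hm' : ((m + 1 : ℕ) : ℕ∞) ≤ n := by
      exact_mod_cast Order.add_one_le_of_lt (by exact_mod_cast hm : (m : ℕ∞) < n)
    have hderiv := hasFDerivAt_intervalIntegral_of_contDiff
      (contDiff_iteratedFDerivFst (k := 1) (add_comm m 1 ▸ hGm hm')) a b x
    simp only [fderiv_iteratedFDerivFst_comp_inl (hGm hm')] at hderiv
    let curryLeft : (E [×(m + 1)]→L[ℝ] F) →L[ℝ] (E →L[ℝ] E [×m]→L[ℝ] F) :=
      (continuousMultilinearCurryLeftEquiv ℝ (fun _ : Fin (m + 1) => E) F).toContinuousLinearEquiv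
    exact hderiv.congr_fderiv <| ContinuousLinearMap.intervalIntegral_comp_comm (𝕜 := ℝ)
      (E := E [×(m + 1)]→L[ℝ] F) (F := E →L[ℝ] E [×m]→L[ℝ] F) curryLeft (hint hm' x)
  · exact intervalIntegral.continuous_parametric_intervalIntegral_of_continuous'
      (f := fun x s => iteratedFDerivFst m G (x, s)) (hcont (by exact_mod_cast hm)) a b

end ParametricIntegral

section TaylorRemainder

/-- The factor `1 / n! * ∫₀¹ (1 - s) ^ n * h⁽ⁿ⁺¹⁾ (τ + s * (t - τ)) ds` that multiplies
`(t - τ) ^ (n + 1)` in the integral form of the Taylor remainder of `h` at `τ`. -/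
noncomputable def taylorRemainderFactor (n : ℕ) (h : ℝ → ℝ) (τ t : ℝ) : ℝ :=
  (n ! : ℝ)⁻¹ * ∫ s in (0 : ℝ)..1, (1 - s) ^ n * iteratedDeriv (n + 1) h (τ + s * (t - τ))

variable {h : ℝ → ℝ} {n : ℕ} {τ t : ℝ}

theorem eq_taylorRemainderFactor_mul_pow (hh : ContDiff ℝ (n + 1) h)
    (hvan : ∀ i < n + 1, iteratedDeriv i h τ = 0) :
    h t = taylorRemainderFactor n h τ t * (t - τ) ^ (n + 1) := by
  have taylor := map_add_eq_sum_add_integral_iteratedFDeriv (f := h) (n := n) (x := τ) (y := t - τ)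
    fun s _ => hh.contDiffAt
  have hsum : ∑ i ∈ Finset.range (n + 1),
      (i ! : ℝ)⁻¹ • iteratedFDeriv ℝ i h τ (fun _ => t - τ) = 0 :=
    Finset.sum_eq_zero fun i hi => by
      simp [iteratedFDeriv_apply_eq_iteratedDeriv_mul_prod, hvan i (Finset.mem_range.1 hi)]
  rw [hsum, zero_add] at taylor
  simp only [iteratedFDeriv_apply_eq_iteratedDeriv_mul_prod, Finset.prod_const,
    Finset.card_univ, Fintype.card_fin, smul_eq_mul, add_sub_cancel] at taylor
  rw [taylor, taylorRemainderFactor, mul_assoc, ← intervalIntegral.integral_mul_const]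
  congr 1
  exact intervalIntegral.integral_congr fun s _ => by ring

theorem taylorRemainderFactor_neg (hh : ContDiff ℝ (n + 1) h)
    (hneg : ∀ x ∈ uIcc τ t, iteratedDeriv (n + 1) h x < 0) : taylorRemainderFactor n h τ t < 0 := by
  have hcont : Continuous fun s => -((1 - s) ^ n * iteratedDeriv (n + 1) h (τ + s * (t - τ))) :=
    (Continuous.mul (by fun_prop)
      ((hh.continuous_iteratedDeriv (n + 1) (by norm_cast)).comp (by fun_prop))).neg
  have hpos : 0 < ∫ s in (0 : ℝ)..1,
      -((1 - s) ^ n * iteratedDeriv (n + 1) h (τ + s * (t - τ))) := by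
    refine intervalIntegral.intervalIntegral_pos_of_pos_on
      (hcont.intervalIntegrable _ _) (fun s hs => ?_) one_pos
    have hmem : τ + s * (t - τ) ∈ uIcc τ t := by
      rw [← segment_eq_uIcc, segment_eq_image']
      exact ⟨s, Ioo_subset_Icc_self hs, rfl⟩
    exact neg_pos.2 (mul_neg_of_pos_of_neg (pow_pos (sub_pos.2 hs.2) n) (hneg _ hmem))
  rw [intervalIntegral.integral_neg, neg_pos] at hpos
  exact mul_neg_of_pos_of_neg (by positivity) hpos

theorem eventually_exists_neg_mul_pow {j : ℕ} (hh : ContDiff ℝ j h)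
    (hvan : ∀ i < j, iteratedDeriv i h τ = 0) (hneg : iteratedDeriv j h τ < 0) :
    ∀ᶠ t in 𝓝 τ, ∃ c < 0, h t = c * (t - τ) ^ j := by
  have hnear : ∀ᶠ x in 𝓝 τ, iteratedDeriv j h x < 0 :=
    (hh.continuous_iteratedDeriv j le_rfl).continuousAt.eventually_lt_const hneg
  cases j with
  | zero => exact hnear.mono fun t ht => ⟨h t, by simpa using ht, by simp⟩
  | succ n =>
    have huIcc : ∀ᶠ t in 𝓝 τ, ∀ x ∈ uIcc τ t, iteratedDeriv (n + 1) h x < 0 :=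
      (tendsto_const_nhds.uIcc tendsto_id).eventually hnear.smallSets
    have hh' : ContDiff ℝ (n + 1) h := by exact_mod_cast hh
    exact huIcc.mono fun t ht =>
      ⟨_, taylorRemainderFactor_neg hh' ht, eq_taylorRemainderFactor_mul_pow hh' hvan⟩

end TaylorRemainder

section SignChange

/-- `h` has a zero of exact odd order `j` at `τ` with negative leading derivative, so that it
changes sign from `+` to `-` there. -/
structure IsDownCrossing (h : ℝ → ℝ) (j : ℕ) (τ : ℝ) : Prop where
  odd : Odd j
  iteratedDeriv_eq_zero : ∀ i < j, iteratedDeriv i h τ = 0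
  iteratedDeriv_neg : iteratedDeriv j h τ < 0

variable {h : ℝ → ℝ} {j : ℕ} {τ : ℝ}

namespace IsDownCrossing

theorem eq_zero (hτ : IsDownCrossing h j τ) : h τ = 0 := by
  simpa using hτ.iteratedDeriv_eq_zero 0 hτ.odd.pos

theorem eventually_pos_left (hτ : IsDownCrossing h j τ) (hh : ContDiff ℝ j h) :
    ∀ᶠ t in 𝓝[<] τ, 0 < h t := by
  filter_upwards [self_mem_nhdsWithin, nhdsWithin_le_nhds <| eventually_exists_neg_mul_pow hh
    hτ.iteratedDeriv_eq_zero hτ.iteratedDeriv_neg] with t (ht : t < τ) ⟨c, hc, hc_eq⟩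
  exact hc_eq ▸ mul_pos_of_neg_of_neg hc (hτ.odd.pow_neg (sub_neg.2 ht))

theorem eventually_neg_right (hτ : IsDownCrossing h j τ) (hh : ContDiff ℝ j h) :
    ∀ᶠ t in 𝓝[>] τ, h t < 0 := by
  filter_upwards [self_mem_nhdsWithin, nhdsWithin_le_nhds <| eventually_exists_neg_mul_pow hh
    hτ.iteratedDeriv_eq_zero hτ.iteratedDeriv_neg] with t (ht : τ < t) ⟨c, hc, hc_eq⟩
  exact hc_eq ▸ mul_neg_of_neg_of_pos hc (pow_pos (sub_pos.2 ht) j)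

theorem of_frequently_pos_left_of_eventually_nonpos_right (hh : ContDiff ℝ j h)
    (hvan : ∀ i < j, iteratedDeriv i h τ = 0) (hne : iteratedDeriv j h τ ≠ 0)
    (hleft : ∃ᶠ t in 𝓝[<] τ, 0 < h t) (hright : ∀ᶠ t in 𝓝[>] τ, h t ≤ 0) :
    IsDownCrossing h j τ := by
  have hneg : iteratedDeriv j h τ < 0 := by
    refine hne.lt_of_le (not_lt.1 fun hpos => ?_)
    have hfactor : ∀ᶠ t in 𝓝 τ, ∃ c < 0, -h t = c * (t - τ) ^ j :=
      eventually_exists_neg_mul_pow hh.neg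
        (fun i hi => by rw [iteratedDeriv_fun_neg, hvan i hi, neg_zero])
        (by rwa [iteratedDeriv_fun_neg, neg_lt_zero])
    obtain ⟨t, ⟨ht_nonpos, c, hc, hc_eq⟩, ht : τ < t⟩ :=
      ((hright.and (nhdsWithin_le_nhds hfactor)).and self_mem_nhdsWithin).exists
    linarith [mul_neg_of_neg_of_pos hc (pow_pos (sub_pos.2 ht) j)]
  refine ⟨not_not.1 fun hodd => ?_, hvan, hneg⟩
  obtain ⟨t, ht_pos, c, hc, hc_eq⟩ :=
    (hleft.and_eventually (nhdsWithin_le_nhds (eventually_exists_neg_mul_pow hh hvan hneg))).exists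
  exact ht_pos.not_ge <| hc_eq ▸
    mul_nonpos_of_nonpos_of_nonneg hc.le ((Nat.not_odd_iff_even.1 hodd).pow_nonneg _)

end IsDownCrossing

theorem exists_frequently_pos_left_eventually_nonpos_right {a b : ℝ} (hh : Continuous h)
    (hab : a ≤ b) (ha : 0 < h a) (hb : h b < 0) :
    ∃ τ ∈ Ioo a b, (∃ᶠ t in 𝓝[<] τ, 0 < h t) ∧ ∀ᶠ t in 𝓝[>] τ, h t ≤ 0 := by
  let S : Set ℝ := {x ∈ Icc a b | 0 < h x}
  have haS : a ∈ S := ⟨left_mem_Icc.2 hab, ha⟩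
  have hlub : IsLUB S (sSup S) := isLUB_csSup ⟨a, haS⟩ ⟨b, fun x hx => hx.1.2⟩
  set τ := sSup S
  have hfreq : ∃ᶠ t in 𝓝[≤] τ, 0 < h t := (hlub.frequently_mem ⟨a, haS⟩).mono fun t ht => ht.2
  have haτ : a ≤ τ := hlub.1 haS
  have hτ_nonneg : 0 ≤ h τ := ge_of_tendsto_of_frequently
    (hh.continuousAt.mono_left nhdsWithin_le_nhds) (hfreq.mono fun _ => le_of_lt)
  have hτb : τ < b := (hlub.2 fun x hx => hx.1.2).lt_of_ne fun heq =>
    hb.not_ge (heq ▸ hτ_nonneg : 0 ≤ h b)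
  have hright : ∀ᶠ t in 𝓝[>] τ, h t ≤ 0 := by
    filter_upwards [Ioo_mem_nhdsGT hτb] with t ht
    exact not_lt.1 fun hpos => (hlub.1 ⟨⟨haτ.trans ht.1.le, ht.2.le⟩, hpos⟩).not_gt ht.1
  have hτ_nonpos : h τ ≤ 0 := le_of_tendsto (hh.continuousAt.mono_left nhdsWithin_le_nhds) hright
  refine ⟨τ, ⟨haτ.lt_of_ne fun heq => ?_, hτb⟩, ?_, hright⟩
  · exact hτ_nonpos.not_gt (heq ▸ ha)
  · refine frequently_nhdsWithin_iff.2 ((frequently_nhdsWithin_iff.1 hfreq).mono fun t ht => ?_)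
    exact ⟨ht.1, (show t ≤ τ from ht.2).lt_of_ne fun heq => hτ_nonpos.not_gt (heq ▸ ht.1)⟩

theorem exists_isDownCrossing_of_pos_of_neg {n : ℕ} {a b : ℝ} (hh : ContDiff ℝ n h) (hab : a ≤ b)
    (ha : 0 < h a) (hb : h b < 0) (hne : ∀ x ∈ Ioo a b, iteratedDeriv n h x ≠ 0) :
    ∃ τ ∈ Ioo a b, ∃ j ≤ n, IsDownCrossing h j τ := by
  classical
  obtain ⟨τ, hτ, hleft, hright⟩ :=
    exists_frequently_pos_left_eventually_nonpos_right hh.continuous hab ha hb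
  have hfin : ∃ j, iteratedDeriv j h τ ≠ 0 := ⟨n, hne τ hτ⟩
  have hle : Nat.find hfin ≤ n := Nat.find_le (hne τ hτ)
  exact ⟨τ, hτ, Nat.find hfin, hle,
    .of_frequently_pos_left_of_eventually_nonpos_right (hh.of_le (by exact_mod_cast hle))
      (fun i hi => not_not.1 (Nat.find_min hfin hi)) (Nat.find_spec hfin) hleft hright⟩

end SignChange

section ImplicitFunction

theorem isInvertible_fderiv_comp_inr_of_hasDerivAt {𝕜 E : Type*} [NontriviallyNormedField 𝕜]
    [NormedAddCommGroup E] [NormedSpace 𝕜 E] {g : E × 𝕜 → 𝕜} {g' : 𝕜} {u : E × 𝕜}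
    (hg : DifferentiableAt 𝕜 g u) (hderiv : HasDerivAt (fun t => g (u.1, t)) g' u.2)
    (hg' : g' ≠ 0) :
    (fderiv 𝕜 g u ∘L .inr 𝕜 E 𝕜).IsInvertible := by
  refine ⟨.unitsEquivAut 𝕜 (Units.mk0 g' hg'), ContinuousLinearMap.ext_ring ?_⟩
  have hslice : HasDerivAt (fun t => g (u.1, t)) (fderiv 𝕜 g u (0, 1)) u.2 :=
    hg.hasFDerivAt.comp_hasDerivAt u.2
      ((hasDerivAt_const u.2 u.1).prodMk (hasDerivAt_id u.2))
  simpa using hderiv.unique hslice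

variable {𝕜 : Type*} [RCLike 𝕜] {E₁ E₂ F : Type*}
  [NormedAddCommGroup E₁] [NormedSpace 𝕜 E₁] [CompleteSpace E₁]
  [NormedAddCommGroup E₂] [NormedSpace 𝕜 E₂] [CompleteSpace E₂]
  [NormedAddCommGroup F] [NormedSpace 𝕜 F] [CompleteSpace F]
  {g : E₁ × E₂ → F} {n : WithTop ℕ∞}

theorem contDiffAt_of_eventually_apply_eq {θ : E₁ → E₂} {w : E₁}
    (hg : ContDiffAt 𝕜 n g (w, θ w)) (hn : n ≠ 0)
    (hinv : (fderiv 𝕜 g (w, θ w) ∘L .inr 𝕜 E₁ E₂).IsInvertible) (hθ : ContinuousAt θ w)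
    (heq : ∀ᶠ x in 𝓝 w, g (x, θ x) = g (w, θ w)) : ContDiffAt 𝕜 n θ w := by
  refine (hg.contDiffAt_implicitFunction hn hinv).congr_of_eventuallyEq ?_
  have hgraph : ContinuousAt (fun x => (x, θ x)) w := continuousAt_id.prodMk hθ
  filter_upwards [heq, hgraph.eventually (hg.eventually_apply_eq_iff_implicitFunction hn hinv)]
    with x hx hiff
  exact (hiff.1 hx).symm

theorem exists_eventually_contDiffAt_eventually_eq_iff {u : E₁ × E₂}
    (hg : ∀ᶠ v in 𝓝 u, ContDiffAt 𝕜 n g v) (hn : n ≠ 0)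
    (hinv : (fderiv 𝕜 g u ∘L .inr 𝕜 E₁ E₂).IsInvertible) :
    ∃ θ : E₁ → E₂, θ u.1 = u.2 ∧ (∀ᶠ w in 𝓝 u.1, ContDiffAt 𝕜 n θ w) ∧
      ∀ᶠ v in 𝓝 u, g v = g u ↔ θ v.1 = v.2 := by
  have hgu : ContDiffAt 𝕜 n g u := hg.self_of_nhds
  have h1n : 1 ≤ n := ENat.one_le_iff_ne_zero_withTop.2 hn
  set θ := hgu.implicitFunction hn hinv
  have hθu : θ u.1 = u.2 := hgu.implicitFunction_apply_self hn hinv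
  have hθ1 : ContDiffAt 𝕜 1 θ u.1 := (hgu.contDiffAt_implicitFunction hn hinv).of_le h1n
  refine ⟨θ, hθu, ?_, hgu.eventually_apply_eq_iff_implicitFunction hn hinv⟩
  have hinv_near : ∀ᶠ v in 𝓝 u, (fderiv 𝕜 g v ∘L .inr 𝕜 E₁ E₂).IsInvertible := by
    have hcont : ContinuousAt (fun v => fderiv 𝕜 g v ∘L .inr 𝕜 E₁ E₂) u :=
      ((hgu.of_le h1n).continuousAt_fderiv one_ne_zero).clm_comp continuousAt_const
    obtain ⟨e, he⟩ := hinv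
    exact hcont.eventually_mem (he ▸ e.nhds)
  have hgraph : Tendsto (fun w => (w, θ w)) (𝓝 u.1) (𝓝 u) := by
    simpa only [id, hθu] using! (continuousAt_id.prodMk hθ1.continuousAt).tendsto
  filter_upwards [hgraph.eventually hg, hgraph.eventually hinv_near,
    hθ1.eventually (by simp), (hgu.eventually_apply_implicitFunction hn hinv).eventually_nhds]
    with w hgw hinvw hθw heq
  exact contDiffAt_of_eventually_apply_eq hgw hn hinvw hθw.continuousAt
    (heq.mono fun x hx => hx.trans heq.self_of_nhds.symm)

end ImplicitFunction

section LocallyConstantPoints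

variable {X α : Type*} [TopologicalSpace X]

/-- The points of `s` near which `g` is constant on `s`. -/
def locallyConstantPoints (g : X → α) (s : Set X) : Set X :=
  {p | p ∈ s ∧ ∃ V ∈ 𝓝 p, ∀ q ∈ V ∩ s, g q = g p}

variable {g : X → α} {s : Set X} {p : X}

theorem mem_locallyConstantPoints_iff :
    p ∈ locallyConstantPoints g s ↔ p ∈ s ∧ ∀ᶠ q in 𝓝[s] p, g q = g p :=
  and_congr_right fun _ => mem_nhdsWithin_iff_exists_mem_nhds_inter.symm

theorem eventually_mem_locallyConstantPoints (hp : p ∈ locallyConstantPoints g s) :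
    ∀ᶠ q in 𝓝[s] p, q ∈ locallyConstantPoints g s := by
  have hconst := (mem_locallyConstantPoints_iff.1 hp).2
  filter_upwards [self_mem_nhdsWithin, hconst, eventually_eventually_nhdsWithin.2 hconst]
    with q hq hqp hq_near
  exact mem_locallyConstantPoints_iff.2 ⟨hq, hq_near.mono fun r hr => hr.trans hqp.symm⟩

theorem mem_closure_locallyConstantPoints [PartialOrder α] [WellFoundedLT α] (hp : p ∈ s)
    (hg : ∀ᶠ q in 𝓝 p, q ∈ s → ∀ᶠ r in 𝓝[s] q, g r ≤ g q) :
    p ∈ closure (locallyConstantPoints g s) := by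
  refine mem_closure_iff.2 fun U hU hpU => ?_
  obtain ⟨V, hV_usc, hV, hpV⟩ := eventually_nhds_iff.1 hg
  obtain ⟨q, ⟨⟨hqU, hqV⟩, hqs⟩, hq_min⟩ :=
    exists_minimalFor_of_wellFoundedLT (· ∈ (U ∩ V) ∩ s) g ⟨p, ⟨hpU, hpV⟩, hp⟩
  refine ⟨q, hqU, mem_locallyConstantPoints_iff.2 ⟨hqs, ?_⟩⟩
  filter_upwards [inter_mem_nhdsWithin s ((hU.inter hV).mem_nhds ⟨hqU, hqV⟩), hV_usc q hqV hqs]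
    with r ⟨hrs, hrUV⟩ hrq
  exact hrq.antisymm (hq_min ⟨hrUV, hrs⟩ hrq)

end LocallyConstantPoints

section PartialIteratedDeriv

variable {𝕜 E F : Type*} [NontriviallyNormedField 𝕜] [NormedAddCommGroup E] [NormedSpace 𝕜 E]
  [NormedAddCommGroup F] [NormedSpace 𝕜 F]

/-- The partial derivative `∂ₜʲ f (t, w)` of a function `f` of `t` and `w`. -/
noncomputable def partialIteratedDeriv (j : ℕ) (f : 𝕜 → E → F) (p : 𝕜 × E) : F :=
  iteratedDeriv j (fun t => f t p.2) p.1

variable {f : 𝕜 → E → F}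

theorem contDiff_partialIteratedDeriv {n : WithTop ℕ∞} {j : ℕ}
    (hf : ContDiff 𝕜 (n + j) (Function.uncurry f)) : ContDiff 𝕜 n (partialIteratedDeriv j f) := by
  induction j generalizing n with
  | zero => simpa [partialIteratedDeriv, Function.uncurry_def] using! hf
  | succ j ih =>
    have ih' : ContDiff 𝕜 (n + 1) (partialIteratedDeriv j f) :=
      ih (by simpa only [Nat.cast_succ, add_assoc, add_comm (1 : WithTop ℕ∞)] using hf)
    have hfderiv : partialIteratedDeriv (j + 1) f =
        fun p => fderiv 𝕜 (partialIteratedDeriv j f) p (1, 0) := by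
      funext p
      have hslice : HasDerivAt (fun t : 𝕜 => (t, p.2)) (1, 0) p.1 :=
        (hasDerivAt_id p.1).prodMk (hasDerivAt_const p.1 p.2)
      have hderiv := ((ih'.differentiable (by simp)) p).hasFDerivAt.comp_hasDerivAt p.1 hslice
      rw [partialIteratedDeriv, iteratedDeriv_succ]
      exact hderiv.deriv
    rw [hfderiv]
    exact (ih'.fderiv_right le_rfl).clm_apply contDiff_const

theorem hasDerivAt_partialIteratedDeriv {j : ℕ} {p : 𝕜 × E}
    (hf : ContDiff 𝕜 (j + 1 : ℕ) (Function.uncurry f)) :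
    HasDerivAt (fun t => partialIteratedDeriv j f (t, p.2)) (partialIteratedDeriv (j + 1) f p)
      p.1 := by
  have hslice : ContDiff 𝕜 (j + 1 : ℕ) (fun t => f t p.2) := hf.comp (contDiff_prodMk_left p.2)
  rw [partialIteratedDeriv, iteratedDeriv_succ]
  exact (hslice.differentiable_iteratedDeriv j (by exact_mod_cast j.lt_succ_self) p.1).hasDerivAt

/-- The order of vanishing of `t ↦ f t w` at `t`, as a function of `p = (t, w)`; it is `0` if all
the derivatives vanish. -/
noncomputable def vanishingOrder (f : 𝕜 → E → F) (p : 𝕜 × E) : ℕ :=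
  sInf {j | partialIteratedDeriv j f p ≠ 0}

theorem eventually_vanishingOrder_le {p : 𝕜 × E} {k : ℕ}
    (hf : ContDiff 𝕜 k (Function.uncurry f)) (hp : partialIteratedDeriv k f p ≠ 0) :
    ∀ᶠ q in 𝓝 p, vanishingOrder f q ≤ vanishingOrder f p := by
  have hmem : partialIteratedDeriv (vanishingOrder f p) f p ≠ 0 :=
    Nat.sInf_mem (s := {j | partialIteratedDeriv j f p ≠ 0}) ⟨k, hp⟩
  have hle : vanishingOrder f p ≤ k := Nat.sInf_le hp
  have hcont : Continuous (partialIteratedDeriv (vanishingOrder f p) f) :=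
    (contDiff_partialIteratedDeriv (n := 0) (hf.of_le (by simpa using! hle))).continuous
  exact (hcont.continuousAt.eventually_ne hmem).mono fun q hq => Nat.sInf_le hq

theorem eventually_mem_closure_locallyConstantPoints_vanishingOrder {p : 𝕜 × E} {k : ℕ}
    (hf : ContDiff 𝕜 k (Function.uncurry f)) (hp : partialIteratedDeriv k f p ≠ 0)
    (s : Set (𝕜 × E)) :
    ∀ᶠ q in 𝓝 p, q ∈ s → q ∈ closure (locallyConstantPoints (vanishingOrder f) s) := by
  have hcont : Continuous (partialIteratedDeriv k f) :=
    (contDiff_partialIteratedDeriv (n := 0) (by simpa using hf)).continuous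
  have hne : ∀ᶠ q in 𝓝 p, partialIteratedDeriv k f q ≠ 0 := hcont.continuousAt.eventually_ne hp
  refine hne.eventually_nhds.mono fun q hq hqs => mem_closure_locallyConstantPoints hqs ?_
  exact hq.mono fun r hr _ => nhdsWithin_le_nhds (eventually_vanishingOrder_le hf hr)

end PartialIteratedDeriv

theorem exists_isDownCrossing_eventually_le {E : Type*} [TopologicalSpace E]
    {f : ℝ → E → ℝ} {k : ℕ} {t₁ : ℝ} {w₁ : E} {U : Set (ℝ × E)} (hU : U ∈ 𝓝 (t₁, w₁))
    (hc : IsDownCrossing (fun t => f t w₁) k t₁) :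
    ∃ p ∈ U, ∃ j ≤ k, IsDownCrossing (fun t => f t p.2) j p.1 ∧
      ∀ᶠ q in 𝓝 p, ∀ i, IsDownCrossing (fun t => f t q.2) i q.1 → j ≤ i := by
  classical
  have horder : ∃ j, ∃ p ∈ interior U, IsDownCrossing (fun t => f t p.2) j p.1 :=
    ⟨k, (t₁, w₁), mem_interior_iff_mem_nhds.2 hU, hc⟩
  obtain ⟨p, hp, hp_crossing⟩ := Nat.find_spec horder
  refine ⟨p, interior_subset hp, Nat.find horder,
    Nat.find_le ⟨(t₁, w₁), mem_interior_iff_mem_nhds.2 hU, hc⟩, hp_crossing, ?_⟩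
  filter_upwards [isOpen_interior.mem_nhds hp] with q hq i hi
  exact Nat.find_le ⟨q, hq, hi⟩

section DownCrossingFamily

variable {E : Type*} [NormedAddCommGroup E] [NormedSpace ℝ E] {f : ℝ → E → ℝ} {j : ℕ} {t₁ : ℝ}
  {w₁ : E}

theorem IsDownCrossing.eventually_exists (hf : ContDiff ℝ j (Function.uncurry f))
    (hc : IsDownCrossing (fun t => f t w₁) j t₁) {P : ℝ × E → Prop}
    (hP : ∀ᶠ p in 𝓝 (t₁, w₁), P p) :
    ∀ᶠ w in 𝓝 w₁, ∃ τ, P (τ, w) ∧ ∃ i ≤ j, IsDownCrossing (fun t => f t w) i τ := by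
  have hslice (w : E) : ContDiff ℝ j (fun t => f t w) := hf.comp (contDiff_prodMk_left w)
  have hcont (t : ℝ) : Continuous (f t) := hf.continuous.comp (.prodMk_right t)
  have hcont_deriv : Continuous (partialIteratedDeriv j f) :=
    (contDiff_partialIteratedDeriv (n := 0) (by simpa using hf)).continuous
  have hne : ∀ᶠ p in 𝓝 (t₁, w₁), partialIteratedDeriv j f p ≠ 0 :=
    hcont_deriv.continuousAt.eventually_ne hc.iteratedDeriv_neg.ne
  obtain ⟨T, hT, W, hW, hTW⟩ := mem_nhds_prod_iff.1 (hP.and hne)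
  obtain ⟨l, u, ht₁, hlu⟩ := mem_nhds_iff_exists_Ioo_subset.1 hT
  obtain ⟨a, ha_pos, ha⟩ :=
    ((hc.eventually_pos_left (hslice w₁)).and (Ioo_mem_nhdsLT ht₁.1)).exists
  obtain ⟨b, hb_neg, hb⟩ :=
    ((hc.eventually_neg_right (hslice w₁)).and (Ioo_mem_nhdsGT ht₁.2)).exists
  filter_upwards [hW, (hcont a).continuousAt.eventually_const_lt ha_pos,
    (hcont b).continuousAt.eventually_lt_const hb_neg] with w hw hwa hwb
  have hbox {x : ℝ} (hx : x ∈ Ioo a b) : P (x, w) ∧ partialIteratedDeriv j f (x, w) ≠ 0 :=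
    hTW ⟨hlu (Ioo_subset_Ioo ha.1.le hb.2.le hx), hw⟩
  obtain ⟨τ, hτ, hτ_crossing⟩ := exists_isDownCrossing_of_pos_of_neg (hslice w)
    (ha.2.trans hb.1).le hwa hwb fun x hx => (hbox hx).2
  exact ⟨τ, (hbox hτ).1, hτ_crossing⟩

theorem IsDownCrossing.exists_contDiffAt_of_eventually_le [CompleteSpace E]
    (hf : ContDiff ℝ ∞ (Function.uncurry f)) (hc : IsDownCrossing (fun t => f t w₁) j t₁)
    (hmin : ∀ᶠ p in 𝓝 (t₁, w₁), ∀ i, IsDownCrossing (fun t => f t p.2) i p.1 → j ≤ i) :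
    ∃ θ : E → ℝ, θ w₁ = t₁ ∧
      ∀ᶠ w in 𝓝 w₁, ContDiffAt ℝ ∞ θ w ∧ IsDownCrossing (fun t => f t w) j (θ w) := by
  obtain ⟨n, rfl⟩ := Nat.exists_eq_add_one_of_ne_zero hc.odd.pos.ne'
  have hg : ContDiff ℝ ∞ fun q : E × ℝ => partialIteratedDeriv n f q.swap :=
    (contDiff_partialIteratedDeriv hf).comp (contDiff_snd.prodMk contDiff_fst)
  have hinv := isInvertible_fderiv_comp_inr_of_hasDerivAt (hg.differentiable (by simp) (w₁, t₁))
    (hasDerivAt_partialIteratedDeriv (p := (t₁, w₁)) (contDiff_infty.1 hf _))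
    hc.iteratedDeriv_neg.ne
  obtain ⟨θ, hθ, hθ_smooth, hθ_iff⟩ :=
    exists_eventually_contDiffAt_eventually_eq_iff (.of_forall fun _ => hg.contDiffAt)
      (by simp) hinv
  refine ⟨θ, hθ, ?_⟩
  have hzero_iff : ∀ᶠ p in 𝓝 (t₁, w₁), partialIteratedDeriv n f p = 0 ↔ θ p.2 = p.1 := by
    have hbase : partialIteratedDeriv n f (t₁, w₁) = 0 := hc.iteratedDeriv_eq_zero n n.lt_succ_self
    simpa [hbase] using (continuous_swap.tendsto (t₁, w₁)).eventually hθ_iff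
  filter_upwards [hθ_smooth, hc.eventually_exists (contDiff_infty.1 hf _) (hmin.and hzero_iff)]
    with w hw ⟨τ, ⟨hτ_min, hτ_iff⟩, i, hi, hτ⟩
  obtain rfl : i = n + 1 := hi.antisymm (hτ_min i hτ)
  obtain rfl : θ w = τ := hτ_iff.1 (hτ.iteratedDeriv_eq_zero n n.lt_succ_self)
  exact ⟨hw, hτ⟩

end DownCrossingFamily

section Factorization

variable {E : Type*} [NormedAddCommGroup E] [NormedSpace ℝ E] {f : ℝ → E → ℝ}

theorem contDiff_taylorRemainderFactor {n : ℕ} {r : ℕ∞}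
    (hf : ContDiff ℝ (r + (n + 1 : ℕ)) (Function.uncurry f)) :
    ContDiff ℝ r fun q : (ℝ × ℝ) × E =>
      taylorRemainderFactor n (fun t => f t q.2) q.1.1 q.1.2 := by
  have hsegment : ContDiff ℝ r fun x : ((ℝ × ℝ) × E) × ℝ =>
      (x.1.1.1 + x.2 * (x.1.1.2 - x.1.1.1), x.1.2) := by fun_prop
  have hweight : ContDiff ℝ r fun x : ((ℝ × ℝ) × E) × ℝ => (1 - x.2) ^ n := by fun_prop
  exact contDiff_const.mul <| contDiff_intervalIntegral_of_contDiff
    (hweight.mul ((contDiff_partialIteratedDeriv hf).comp hsegment)) 0 1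

/-- Near `(t₁, w₁)` one has `f t w = a (t, w) * (t - θ w) ^ k` with smooth `a < 0` and a smooth
zero curve `θ` through `(t₁, w₁)`. -/
def HasNegPowFactorization (f : ℝ → E → ℝ) (k : ℕ) (t₁ : ℝ) (w₁ : E) : Prop :=
  ∃ (U : Set (ℝ × E)) (Uw : Set E) (a : ℝ × E → ℝ) (θ : E → ℝ),
    IsOpen U ∧ (t₁, w₁) ∈ U ∧ IsOpen Uw ∧ w₁ ∈ Uw ∧
    ContDiffOn ℝ ∞ a U ∧ ContDiffOn ℝ ∞ θ Uw ∧ θ w₁ = t₁ ∧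
    (∀ p ∈ U, a p < 0) ∧ ∀ p ∈ U, p.2 ∈ Uw → f p.1 p.2 = a p * (p.1 - θ p.2) ^ k

theorem hasNegPowFactorization_of_eventually {k : ℕ} {t₁ : ℝ} {w₁ : E} {a : ℝ × E → ℝ} {θ : E → ℝ}
    (hθ₁ : θ w₁ = t₁) (hθ : ∀ᶠ w in 𝓝 w₁, ContDiffAt ℝ ∞ θ w)
    (ha : ∀ᶠ p in 𝓝 (t₁, w₁), ContDiffAt ℝ ∞ a p) (ha_neg : ∀ᶠ p in 𝓝 (t₁, w₁), a p < 0)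
    (hfa : ∀ᶠ p in 𝓝 (t₁, w₁), f p.1 p.2 = a p * (p.1 - θ p.2) ^ k) :
    HasNegPowFactorization f k t₁ w₁ := by
  obtain ⟨U, hU, hU_open, hU_mem⟩ := eventually_nhds_iff.1 (ha.and (ha_neg.and hfa))
  obtain ⟨Uw, hUw, hUw_open, hUw_mem⟩ := eventually_nhds_iff.1 hθ
  exact ⟨U, Uw, a, θ, hU_open, hU_mem, hUw_open, hUw_mem,
    fun p hp => (hU p hp).1.contDiffWithinAt, fun w hw => (hUw w hw).contDiffWithinAt, hθ₁,
    fun p hp => (hU p hp).2.1, fun p hp _ => (hU p hp).2.2⟩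

theorem hasNegPowFactorization_of_eventually_isDownCrossing {k : ℕ} {t₁ : ℝ} {w₁ : E} {θ : E → ℝ}
    (hf : ContDiff ℝ ∞ (Function.uncurry f)) (hθ₁ : θ w₁ = t₁)
    (hθ : ∀ᶠ w in 𝓝 w₁, ContDiffAt ℝ ∞ θ w)
    (hcross : ∀ᶠ w in 𝓝 w₁, IsDownCrossing (fun t => f t w) k (θ w)) :
    HasNegPowFactorization f k t₁ w₁ := by
  have hc : IsDownCrossing (fun t => f t w₁) k t₁ := hθ₁ ▸ hcross.self_of_nhds
  obtain ⟨n, rfl⟩ := Nat.exists_eq_add_one_of_ne_zero hc.odd.pos.ne'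
  have hslice (w : E) : ContDiff ℝ (n + 1) (fun t => f t w) :=
    (hf.comp (contDiff_prodMk_left w)).of_le (by norm_cast; simp)
  let a (p : ℝ × E) : ℝ := taylorRemainderFactor n (fun t => f t p.2) (θ p.2) p.1
  have hsnd : Tendsto Prod.snd (𝓝 (t₁, w₁)) (𝓝 w₁) := continuous_snd.tendsto _
  have hfactor : ContDiff ℝ ∞ fun q : (ℝ × ℝ) × E =>
      taylorRemainderFactor n (fun t => f t q.2) q.1.1 q.1.2 :=
    contDiff_taylorRemainderFactor (r := ⊤) hf
  have ha : ∀ᶠ p in 𝓝 (t₁, w₁), ContDiffAt ℝ ∞ a p := by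
    filter_upwards [hsnd.eventually hθ] with p hp
    have hbase : ContDiffAt ℝ ∞ (fun p : ℝ × E => ((θ p.2, p.1), p.2)) p :=
      ((hp.comp p contDiffAt_snd).prodMk contDiffAt_fst).prodMk contDiffAt_snd
    have hcomp := hfactor.comp_contDiffAt p hbase
    exact hcomp
  have ha₁ : a (t₁, w₁) < 0 := by
    refine taylorRemainderFactor_neg (hslice w₁) fun x hx => ?_
    obtain rfl : x = t₁ := by simpa [hθ₁] using hx
    exact hc.iteratedDeriv_neg
  refine hasNegPowFactorization_of_eventually hθ₁ hθ ha
    (ha.self_of_nhds.continuousAt.eventually_lt_const ha₁) ?_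
  filter_upwards [hsnd.eventually hcross] with p hp
  exact eq_taylorRemainderFactor_mul_pow (hslice p.2) hp.iteratedDeriv_eq_zero

theorem IsDownCrossing.hasNegPowFactorization_of_eventually_le [CompleteSpace E] {j : ℕ} {t₁ : ℝ}
    {w₁ : E} (hf : ContDiff ℝ ∞ (Function.uncurry f))
    (hc : IsDownCrossing (fun t => f t w₁) j t₁)
    (hmin : ∀ᶠ p in 𝓝 (t₁, w₁), ∀ i, IsDownCrossing (fun t => f t p.2) i p.1 → j ≤ i) :
    HasNegPowFactorization f j t₁ w₁ := by
  obtain ⟨θ, hθ₁, hθ⟩ := hc.exists_contDiffAt_of_eventually_le hf hmin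
  exact hasNegPowFactorization_of_eventually_isDownCrossing hf hθ₁ (hθ.mono fun w hw => hw.1)
    (hθ.mono fun w hw => hw.2)

end Factorization

theorem stmt_17_general {E : Type*} [NormedAddCommGroup E] [NormedSpace ℝ E] [CompleteSpace E]
    {f : ℝ → E → ℝ} (hf : ContDiff ℝ ∞ (Function.uncurry f)) {t₀ : ℝ} {w₀ : E} {k : ℕ}
    (hk : Odd k) (hvan : ∀ j < k, iteratedDeriv j (fun t => f t w₀) t₀ = 0)
    (hneg : iteratedDeriv k (fun t => f t w₀) t₀ < 0) :
    ((∀ p ∈ locallyConstantPoints (vanishingOrder f) {p | f p.1 p.2 = 0},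
        ∃ V ∈ 𝓝 p, ∀ q ∈ V ∩ {p | f p.1 p.2 = 0},
          q ∈ locallyConstantPoints (vanishingOrder f) {p | f p.1 p.2 = 0}) ∧
      ∃ V ∈ 𝓝 (t₀, w₀), ∀ p ∈ V ∩ {p | f p.1 p.2 = 0}, ∀ ε > 0,
        ∃ q ∈ locallyConstantPoints (vanishingOrder f) {p | f p.1 p.2 = 0}, dist p q < ε) ∧
    ∀ ε > 0, ∃ (t₁ : ℝ) (w₁ : E) (k' : ℕ), dist (t₁, w₁) (t₀, w₀) < ε ∧ f t₁ w₁ = 0 ∧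
      Odd k' ∧ 0 < k' ∧ k' ≤ k ∧ HasNegPowFactorization f k' t₁ w₁ := by
  refine ⟨⟨fun p hp => ?_, ?_⟩, fun ε hε => ?_⟩
  · exact mem_nhdsWithin_iff_exists_mem_nhds_inter.1 (eventually_mem_locallyConstantPoints hp)
  · exact ⟨_, eventually_mem_closure_locallyConstantPoints_vanishingOrder (p := (t₀, w₀))
      (contDiff_infty.1 hf _) hneg.ne _, fun p ⟨hpV, hpZ⟩ => Metric.mem_closure_iff.1 (hpV hpZ)⟩
  · obtain ⟨p, hp, j, hjk, hj, hmin⟩ :=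
      exists_isDownCrossing_eventually_le (Metric.ball_mem_nhds (t₀, w₀) hε) ⟨hk, hvan, hneg⟩
    exact ⟨p.1, p.2, j, hp, hj.eq_zero, hj.odd, hj.odd.pos, hjk,
      hj.hasNegPowFactorization_of_eventually_le hf hmin⟩

/-- preparation of the finite-order sign change: if `t ↦ f(t,w)`
changes sign from `+` to `-` for all `w` near `w₀`, and `f(·, w₀)` vanishes at
`t₀` to exact order `k` (odd) with `∂_t^k f(t₀,w₀) < 0`, then the set of zeros
where the order of vanishing in `t` is locally constant is open and dense in
`f⁻¹(0)` near `(t₀,w₀)`; consequently arbitrarily close to `(t₀,w₀)` there are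
points `(t₁,w₁)` near which `f(t,w) = a(t,w)·(t - θ(w))^{k'}` with `a < 0`
smooth, `θ` smooth, and `k' ≤ k` odd. -/
theorem stmt_17 {m : ℕ}
    (f : ℝ → EuclideanSpace ℝ (Fin m) → ℝ)
    (hf : ContDiff ℝ (⊤ : ℕ∞) (Function.uncurry f))
    (t₀ : ℝ) (w₀ : EuclideanSpace ℝ (Fin m)) (k : ℕ) (hk : Odd k)
    (hvan : ∀ j < k, iteratedDeriv j (fun t => f t w₀) t₀ = 0)
    (hneg : iteratedDeriv k (fun t => f t w₀) t₀ < 0)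
    (hsign : ∃ δ > 0, ∀ w, dist w w₀ < δ →
      ∃ s t', t₀ - δ < s ∧ s < t' ∧ t' < t₀ + δ ∧ 0 < f s w ∧ f t' w < 0)
    (Z Good : Set (ℝ × EuclideanSpace ℝ (Fin m)))
    (ord : ℝ × EuclideanSpace ℝ (Fin m) → ℕ)
    (hZ : Z = {p | f p.1 p.2 = 0})
    (hord : ∀ p, ord p = sInf {j : ℕ | iteratedDeriv j (fun t => f t p.2) p.1 ≠ 0})
    (hGood : Good = {p | p ∈ Z ∧ ∃ V ∈ nhds p, ∀ q ∈ V ∩ Z, ord q = ord p}) :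
    -- `Good` is open in `Z` and dense in `Z` near `(t₀, w₀)`:
    ((∀ p ∈ Good, ∃ V ∈ nhds p, ∀ q ∈ V ∩ Z, q ∈ Good) ∧
      ∃ V ∈ nhds (t₀, w₀), ∀ p ∈ V ∩ Z, ∀ ε > 0, ∃ q ∈ Good, dist p q < ε) ∧
    -- factorization near nearby points of constant odd order:
    (∀ ε > 0, ∃ (t₁ : ℝ) (w₁ : EuclideanSpace ℝ (Fin m)) (k' : ℕ),
      dist (t₁, w₁) (t₀, w₀) < ε ∧ f t₁ w₁ = 0 ∧ Odd k' ∧ 0 < k' ∧ k' ≤ k ∧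
      ∃ (U : Set (ℝ × EuclideanSpace ℝ (Fin m)))
        (Uw : Set (EuclideanSpace ℝ (Fin m)))
        (a : ℝ × EuclideanSpace ℝ (Fin m) → ℝ)
        (θ : EuclideanSpace ℝ (Fin m) → ℝ),
        IsOpen U ∧ (t₁, w₁) ∈ U ∧ IsOpen Uw ∧ w₁ ∈ Uw ∧
        ContDiffOn ℝ (⊤ : ℕ∞) a U ∧ ContDiffOn ℝ (⊤ : ℕ∞) θ Uw ∧ θ w₁ = t₁ ∧
        (∀ p ∈ U, a p < 0) ∧
        (∀ p ∈ U, p.2 ∈ Uw → f p.1 p.2 = a p * (p.1 - θ p.2) ^ k')) := by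
  subst hZ hGood
  obtain rfl : ord = vanishingOrder f := funext hord
  exact stmt_17_general hf hk hvan hneg
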